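/- Let d ≥ 1 and let b : ℕ₊^d → ℝ be a family of coefficients such that for some d-tuple θ = (θ₁,…,θ_d) of non-negative integers, ∑_{β∈ℕ₊^d} b_β² · β₁^{−θ₁}⋯β_d^{−θ_d} < ∞. Then for every Schwartz function φ on ℝ^d the series ∑_{β∈ℕ₊^d} b_β ∫_{ℝ^d} φ(x) η_β(x) dx converges absolutely, and the map T(φ) := ∑_{β∈ℕ₊^d} b_β ∫_{ℝ^d} φ(x) η_β(x) dx defines a continuous linear functional on the Schwartz space S(ℝ^d), i.e. a tempered distribution T = ∑_β b_β η_β. -/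

import Mathlib

/-!
The harmonic oscillator `H = |x|² - Δ` is a continuous symmetric operator on Schwartz functions,
and the `η_β` are `L²`-orthonormal eigenfunctions of it: `H η_β = λ_β η_β` with
`λ_β = ∑ i, (2 β_i - 1)`. In one variable, both facts follow from the ladder operators `x ± d/dx`.

Since `1 ≤ β_i ≤ λ_β`, taking `m = ∑ i, θ_i` gives `∏ i, β_i ^ θ_i ≤ λ_β ^ m`, so the coefficients
`b_β / λ_β ^ m` are square summable and define `g = ∑ β, (b_β / λ_β ^ m) η_β` in `L²`. Moving
`H ^ m` across the integral, `b_β ∫ φ η_β = (b_β / λ_β ^ m) ∫ (H ^ m φ) η_β`. The series therefore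
converges absolutely by Bessel's inequality, and its sum is `⟪g, H ^ m φ⟫`, which is continuous
in `φ`.
-/

open scoped BigOperators
open MeasureTheory

/-- The `n`-th Hermite function `ζ_n` (indexed by `n ∈ ℕ₊`):
`ζ_n(x) = π^{-1/4} ((n-1)!)^{-1/2} e^{-x²/2} h_{n-1}(√2 x)`,
where `h_k` is the `k`-th (probabilists') Hermite polynomial. -/
noncomputable def hermiteFun (n : ℕ+) (x : ℝ) : ℝ :=
  Real.pi ^ (-(1 / 4 : ℝ)) * ((Nat.factorial ((n : ℕ) - 1) : ℝ)) ^ (-(1 / 2 : ℝ)) *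
    Real.exp (-x ^ 2 / 2) *
      Polynomial.aeval (Real.sqrt 2 * x) (Polynomial.hermite ((n : ℕ) - 1))

/-- The tensor-product Hermite function `η_β` on `ℝ^d`, for `β ∈ ℕ₊^d`. -/
noncomputable def hermiteTensor {d : ℕ} (β : Fin d → ℕ+)
    (x : EuclideanSpace ℝ (Fin d)) : ℝ :=
  ∏ i, hermiteFun (β i) (x i)

open Finset SchwartzMap LineDeriv Laplacian Polynomial

section Tensor
variable {ι : Type*}

lemma one_add_sum_le_prod_one_add {s : Finset ι} {a : ι → ℝ} (ha : ∀ i ∈ s, 0 ≤ a i) :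
    1 + ∑ i ∈ s, a i ≤ ∏ i ∈ s, (1 + a i) := by
  classical
  induction s using Finset.induction_on with
  | empty => simp
  | insert i s hi ih =>
    obtain ⟨hai, has⟩ := forall_mem_insert _ _ _ |>.1 ha
    rw [sum_insert hi, prod_insert hi]
    nlinarith [ih has, mul_nonneg hai (sum_nonneg has)]

variable [Fintype ι]

lemma norm_le_prod_one_add_norm_coord (x : EuclideanSpace ℝ ι) : ‖x‖ ≤ ∏ i, (1 + ‖x i‖) := by
  classical
  calc ‖x‖ = ‖∑ i, x i • EuclideanSpace.single i (1 : ℝ)‖ := by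
        simpa using congrArg norm ((EuclideanSpace.basisFun ι ℝ).sum_repr x).symm
    _ ≤ ∑ i, ‖x i‖ := norm_sum_le_of_le _ fun i _ => by simp [norm_smul]
    _ ≤ 1 + ∑ i, ‖x i‖ := le_add_of_nonneg_left zero_le_one
    _ ≤ ∏ i, (1 + ‖x i‖) := one_add_sum_le_prod_one_add fun i _ => norm_nonneg _

lemma norm_iteratedFDeriv_comp_coord_le (f : 𝓢(ℝ, ℝ)) (i : ι) (n : ℕ) (x : EuclideanSpace ℝ ι) :
    ‖iteratedFDeriv ℝ n (fun y : EuclideanSpace ℝ ι => f (y i)) x‖ ≤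
      ‖iteratedFDeriv ℝ n f (x i)‖ := by
  let π : EuclideanSpace ℝ ι →L[ℝ] ℝ := EuclideanSpace.proj i
  have hπ : ‖π‖ ≤ 1 := π.opNorm_le_bound zero_le_one fun y => by
    simpa [π] using PiLp.norm_apply_le y i
  calc ‖iteratedFDeriv ℝ n (f ∘ π) x‖
      = ‖(iteratedFDeriv ℝ n f (x i)).compContinuousLinearMap fun _ => π‖ := by
        rw [π.iteratedFDeriv_comp_right (f.smooth ⊤) x (mod_cast le_top)]
        rfl
    _ ≤ ‖iteratedFDeriv ℝ n f (x i)‖ * ∏ _j : Fin n, ‖π‖ :=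
        ContinuousMultilinearMap.norm_compContinuousLinearMap_le _ _
    _ ≤ ‖iteratedFDeriv ℝ n f (x i)‖ :=
        mul_le_of_le_one_right (norm_nonneg _)
          (prod_le_one (fun _ _ => norm_nonneg _) fun _ _ => hπ)

lemma exists_forall_one_add_norm_pow_mul_iteratedFDeriv_le {E F : Type*} [NormedAddCommGroup E]
    [NormedSpace ℝ E] [NormedAddCommGroup F] [NormedSpace ℝ F] (f : 𝓢(E, F)) (k n : ℕ) :
    ∃ C, ∀ x, (1 + ‖x‖) ^ k * ‖iteratedFDeriv ℝ n f x‖ ≤ C :=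
  ⟨_, one_add_le_sup_seminorm_apply (𝕜 := ℝ) (m := (k, n)) le_rfl le_rfl f⟩

lemma norm_iteratedFDeriv_prod_coord_le [DecidableEq ι] (f : ι → 𝓢(ℝ, ℝ)) (n : ℕ)
    (x : EuclideanSpace ℝ ι) :
    ‖iteratedFDeriv ℝ n (fun y : EuclideanSpace ℝ ι => ∏ i, f i (y i)) x‖ ≤
      ∑ p ∈ (univ : Finset ι).sym n, ((p : Multiset ι).countPerms : ℝ) *
        ∏ i, ‖iteratedFDeriv ℝ ((p : Multiset ι).count i) (f i) (x i)‖ := by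
  have hf (i : ι) : ContDiff ℝ n fun y : EuclideanSpace ℝ ι => f i (y i) :=
    ((f i).smooth n).comp (by fun_prop)
  refine (norm_iteratedFDeriv_prod_le (fun i _ => hf i) le_rfl).trans ?_
  gcongr
  exact norm_iteratedFDeriv_comp_coord_le _ _ _ _

/-- The tensor product `x ↦ ∏ i, f i (x i)` of one-dimensional Schwartz functions. -/
noncomputable def schwartzTensor (f : ι → 𝓢(ℝ, ℝ)) : 𝓢(EuclideanSpace ℝ ι, ℝ) where
  toFun x := ∏ i, f i (x i)
  smooth' := contDiff_prod fun i _ => (f i).smooth'.comp (EuclideanSpace.proj (𝕜 := ℝ) i).contDiff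
  decay' k n := by
    classical
    choose C hC using fun i => exists_forall_one_add_norm_pow_mul_iteratedFDeriv_le (f i) k
    refine ⟨∑ p ∈ (univ : Finset ι).sym n, ((p : Multiset ι).countPerms : ℝ) *
      ∏ i, C i ((p : Multiset ι).count i), fun x => ?_⟩
    calc ‖x‖ ^ k * ‖iteratedFDeriv ℝ n (fun y : EuclideanSpace ℝ ι => ∏ i, f i (y i)) x‖
        ≤ (∏ i, (1 + ‖x i‖)) ^ k * ∑ p ∈ (univ : Finset ι).sym n,
            ((p : Multiset ι).countPerms : ℝ) *
            ∏ i, ‖iteratedFDeriv ℝ ((p : Multiset ι).count i) (f i) (x i)‖ := by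
          gcongr
          · exact norm_le_prod_one_add_norm_coord x
          · exact norm_iteratedFDeriv_prod_coord_le f n x
      _ = ∑ p ∈ (univ : Finset ι).sym n, ((p : Multiset ι).countPerms : ℝ) *
            ∏ i, ((1 + ‖x i‖) ^ k *
              ‖iteratedFDeriv ℝ ((p : Multiset ι).count i) (f i) (x i)‖) := by
          simp only [← prod_pow, mul_sum, prod_mul_distrib, mul_left_comm]
      _ ≤ _ := by
          gcongr
          exact hC _ _ _

lemma schwartzTensor_apply (f : ι → 𝓢(ℝ, ℝ)) (x : EuclideanSpace ℝ ι) :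
    schwartzTensor f x = ∏ i, f i (x i) := rfl

lemma integral_schwartzTensor_mul (f g : ι → 𝓢(ℝ, ℝ)) :
    ∫ x, schwartzTensor f x * schwartzTensor g x = ∏ i, ∫ t, f i t * g i t := by
  simp only [schwartzTensor_apply, ← prod_mul_distrib]
  rw [← integral_fintype_prod_volume_eq_prod fun i t => f i t * g i t]
  exact (PiLp.volume_preserving_ofLp ι).integral_comp
    (MeasurableEquiv.toLp 2 (ι → ℝ)).symm.measurableEmbedding fun y => ∏ i, f i (y i) * g i (y i)

variable [DecidableEq ι]

lemma schwartzTensor_update_apply (f : ι → 𝓢(ℝ, ℝ)) (i : ι) (g : 𝓢(ℝ, ℝ))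
    (x : EuclideanSpace ℝ ι) :
    schwartzTensor (Function.update f i g) x = g (x i) * ∏ j ∈ univ.erase i, f j (x j) := by
  rw [schwartzTensor_apply, ← mul_prod_erase _ _ (mem_univ i), Function.update_self]
  congr 1
  exact prod_congr rfl fun j hj => by rw [Function.update_of_ne (ne_of_mem_erase hj)]

lemma schwartzTensor_update_smul (f : ι → 𝓢(ℝ, ℝ)) (i : ι) (c : ℝ) (g : 𝓢(ℝ, ℝ)) :
    schwartzTensor (Function.update f i (c • g)) =
      c • schwartzTensor (Function.update f i g) := by
  ext x
  simp [schwartzTensor_update_apply, mul_assoc]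

lemma lineDerivOp_single_schwartzTensor (f : ι → 𝓢(ℝ, ℝ)) (i : ι) :
    ∂_{EuclideanSpace.single i (1 : ℝ)} (schwartzTensor f) =
      schwartzTensor (Function.update f i (derivCLM ℝ ℝ (f i))) := by
  ext x
  have hline (t : ℝ) : schwartzTensor f (x + t • EuclideanSpace.single i 1) =
      f i (x i + t) * ∏ j ∈ univ.erase i, f j (x j) := by
    rw [schwartzTensor_apply, ← mul_prod_erase _ _ (mem_univ i)]
    congr 1
    · simp
    · exact prod_congr rfl fun j hj => by simp [ne_of_mem_erase hj]
  rw [lineDerivOp_apply, schwartzTensor_update_apply, derivCLM_apply]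
  simp only [lineDeriv, hline]
  rw [deriv_mul_const_field, deriv_comp_const_add, add_zero]

end Tensor

section HarmonicOscillator

variable {E : Type*} [NormedAddCommGroup E] [InnerProductSpace ℝ E] [FiniteDimensional ℝ E]

/-- The harmonic oscillator `|x|² - Δ` on Schwartz functions. -/
noncomputable def harmonicOscillator : 𝓢(E, ℝ) →L[ℝ] 𝓢(E, ℝ) :=
  smulLeftCLM ℝ (fun x : E => ‖x‖ ^ 2) - laplacianCLM ℝ E 𝓢(E, ℝ)

lemma harmonicOscillator_apply (f : 𝓢(E, ℝ)) (x : E) :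
    harmonicOscillator f x = ‖x‖ ^ 2 * f x - Δ f x := by
  simp [harmonicOscillator, smulLeftCLM_apply_apply (Function.hasTemperateGrowth_norm_sq E)]

variable [MeasurableSpace E] [BorelSpace E]

lemma integrable_schwartz_mul (f g : 𝓢(E, ℝ)) : Integrable fun x => f x * g x :=
  (pairing (ContinuousLinearMap.mul ℝ ℝ) f g).integrable

lemma integral_harmonicOscillator_mul (f g : 𝓢(E, ℝ)) :
    ∫ x, harmonicOscillator f x * g x = ∫ x, f x * harmonicOscillator g x := by
  let q : 𝓢(E, ℝ) := smulLeftCLM ℝ (fun x : E => ‖x‖ ^ 2) g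
  have hq (x : E) : q x = ‖x‖ ^ 2 * g x :=
    smulLeftCLM_apply_apply (Function.hasTemperateGrowth_norm_sq E) _ _
  calc ∫ x, harmonicOscillator f x * g x
      = ∫ x, (f x * q x - Δ f x * g x) := by
        simp only [harmonicOscillator_apply, hq, sub_mul, mul_assoc, mul_left_comm]
    _ = ∫ x, (f x * q x - f x * Δ g x) := by
        rw [integral_sub (integrable_schwartz_mul _ _) (integrable_schwartz_mul _ _),
          integral_sub (integrable_schwartz_mul _ _) (integrable_schwartz_mul _ _),
          SchwartzMap.integral_mul_laplacian_right_eq_left]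
    _ = ∫ x, f x * harmonicOscillator g x := by
        simp only [harmonicOscillator_apply, hq, mul_sub]

lemma integral_harmonicOscillator_pow_mul {g : 𝓢(E, ℝ)} {c : ℝ}
    (hg : harmonicOscillator g = c • g) (f : 𝓢(E, ℝ)) (m : ℕ) :
    ∫ x, (harmonicOscillator ^ m) f x * g x = c ^ m * ∫ x, f x * g x := by
  induction m with
  | zero => simp
  | succ m ih =>
    rw [pow_succ', mul_apply_eq_comp, integral_harmonicOscillator_mul, hg]
    simp only [smul_apply, smul_eq_mul, mul_left_comm _ c]
    rw [integral_const_mul, ih, pow_succ', mul_assoc]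

lemma laplacian_real_eq (f : 𝓢(ℝ, ℝ)) : Δ f = derivCLM ℝ ℝ (derivCLM ℝ ℝ f) := by
  rw [SchwartzMap.laplacian_eq_sum (OrthonormalBasis.singleton (Fin 1) ℝ) f]
  simp only [OrthonormalBasis.singleton_apply, univ_unique, sum_singleton]
  rfl

variable {ι : Type*} [Fintype ι]

lemma laplacian_schwartzTensor [DecidableEq ι] (f : ι → 𝓢(ℝ, ℝ)) :
    Δ (schwartzTensor f) = ∑ i, schwartzTensor (Function.update f i (Δ (f i))) := by
  simp only [SchwartzMap.laplacian_eq_sum (EuclideanSpace.basisFun ι ℝ),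
    EuclideanSpace.basisFun_apply, lineDerivOp_single_schwartzTensor, laplacian_real_eq,
    Function.update_idem, Function.update_self]

lemma harmonicOscillator_schwartzTensor [DecidableEq ι] (f : ι → 𝓢(ℝ, ℝ)) :
    harmonicOscillator (schwartzTensor f) =
      ∑ i, schwartzTensor (Function.update f i (harmonicOscillator (f i))) := by
  ext x
  have hsplit (i : ι) : schwartzTensor f x = f i (x i) * ∏ j ∈ univ.erase i, f j (x j) := by
    rw [← schwartzTensor_update_apply, Function.update_eq_self]
  rw [harmonicOscillator_apply, laplacian_schwartzTensor, _root_.sum_apply, _root_.sum_apply,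
    EuclideanSpace.norm_sq_eq, sum_mul, ← sum_sub_distrib]
  refine sum_congr rfl fun i _ => ?_
  rw [schwartzTensor_update_apply, schwartzTensor_update_apply, harmonicOscillator_apply, hsplit i]
  ring

lemma harmonicOscillator_schwartzTensor_of_eigen {f : ι → 𝓢(ℝ, ℝ)} {c : ι → ℝ}
    (hf : ∀ i, harmonicOscillator (f i) = c i • f i) :
    harmonicOscillator (schwartzTensor f) = (∑ i, c i) • schwartzTensor f := by
  classical
  simp_rw [harmonicOscillator_schwartzTensor, hf, schwartzTensor_update_smul,
    Function.update_eq_self, sum_smul]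

end HarmonicOscillator

section Ladder

/-- The lowering (annihilation) operator `x + d/dx`, without the customary factor `1 / √2`. -/
noncomputable def loweringOperator : 𝓢(ℝ, ℝ) →L[ℝ] 𝓢(ℝ, ℝ) :=
  smulLeftCLM ℝ (fun x : ℝ => x) + derivCLM ℝ ℝ

/-- The raising (creation) operator `x - d/dx`, without the customary factor `1 / √2`. -/
noncomputable def raisingOperator : 𝓢(ℝ, ℝ) →L[ℝ] 𝓢(ℝ, ℝ) :=
  smulLeftCLM ℝ (fun x : ℝ => x) - derivCLM ℝ ℝ

lemma loweringOperator_apply (f : 𝓢(ℝ, ℝ)) (x : ℝ) :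
    loweringOperator f x = x * f x + deriv f x := by
  simp [loweringOperator, smulLeftCLM_apply_apply .id']

lemma raisingOperator_apply (f : 𝓢(ℝ, ℝ)) (x : ℝ) :
    raisingOperator f x = x * f x - deriv f x := by
  simp [raisingOperator, smulLeftCLM_apply_apply .id']

lemma harmonicOscillator_eq_loweringOperator_raisingOperator (f : 𝓢(ℝ, ℝ)) :
    harmonicOscillator f = loweringOperator (raisingOperator f) - f := by
  ext x
  have hderiv : deriv (raisingOperator f) x = f x + x * deriv f x - deriv (deriv f) x := by
    have h := ((hasDerivAt_id' x).mul (f.hasDerivAt x)).sub ((derivCLM ℝ ℝ f).hasDerivAt x)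
    rw [one_mul] at h
    exact (h.congr_of_eventuallyEq (.of_forall (raisingOperator_apply f))).deriv
  have hΔ : Δ f x = deriv (deriv f) x := by
    rw [laplacian_real_eq]
    rfl
  rw [harmonicOscillator_apply, sub_apply, loweringOperator_apply, raisingOperator_apply, hderiv,
    hΔ, Real.norm_eq_abs, sq_abs]
  ring

lemma integral_mul_raisingOperator (f g : 𝓢(ℝ, ℝ)) :
    ∫ x, f x * raisingOperator g x = ∫ x, loweringOperator f x * g x := by
  let xg : 𝓢(ℝ, ℝ) := smulLeftCLM ℝ (fun x : ℝ => x) g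
  have hxg (x : ℝ) : xg x = x * g x := smulLeftCLM_apply_apply .id' _ _
  calc ∫ x, f x * raisingOperator g x
      = ∫ x, (f x * xg x - f x * derivCLM ℝ ℝ g x) := by
        simp only [raisingOperator_apply, hxg, mul_sub, derivCLM_apply]
    _ = ∫ x, (f x * xg x + derivCLM ℝ ℝ f x * g x) := by
        rw [integral_sub (integrable_schwartz_mul _ _) (integrable_schwartz_mul _ _),
          integral_add (integrable_schwartz_mul _ _) (integrable_schwartz_mul _ _)]
        simp only [derivCLM_apply]
        rw [SchwartzMap.integral_mul_deriv_eq_neg_deriv_mul, sub_neg_eq_add]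
    _ = ∫ x, loweringOperator f x * g x := by
        simp only [loweringOperator_apply, hxg, add_mul, derivCLM_apply, mul_left_comm, mul_assoc]

end Ladder

section HermiteFunctions

lemma exists_forall_abs_eval_mul_exp_le (p : ℝ[X]) :
    ∃ C, ∀ x, |p.eval x * Real.exp (-(x ^ 2 / 2))| ≤ C := by
  induction p using Polynomial.induction_on' with
  | add p q hp hq =>
    obtain ⟨A, hA⟩ := hp
    obtain ⟨B, hB⟩ := hq
    refine ⟨A + B, fun x => ?_⟩
    rw [eval_add, add_mul]
    exact (abs_add_le _ _).trans (add_le_add (hA x) (hB x))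
  | monomial n a =>
    refine ⟨|a| * (n.factorial * Real.exp (1 / 2)), fun x => ?_⟩
    have hpow : |x| ^ n ≤ n.factorial * Real.exp |x| :=
      (div_le_iff₀' (by positivity)).1 (Real.pow_div_factorial_le_exp |x| (abs_nonneg x) n)
    calc |(monomial n a).eval x * Real.exp (-(x ^ 2 / 2))|
        = |a| * (|x| ^ n * Real.exp (-(x ^ 2 / 2))) := by
          rw [eval_monomial, abs_mul, abs_mul, abs_pow, Real.abs_exp, mul_assoc]
      _ ≤ |a| * (n.factorial * Real.exp |x| * Real.exp (-(x ^ 2 / 2))) := by gcongr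
      _ = |a| * (n.factorial * Real.exp (|x| + -(x ^ 2 / 2))) := by rw [Real.exp_add, mul_assoc]
      _ ≤ |a| * (n.factorial * Real.exp (1 / 2)) := by
          gcongr
          nlinarith [sq_nonneg (|x| - 1), sq_abs x]

/-- The Gaussian `e^{-x²/2}` as a Schwartz function. -/
noncomputable def gaussianSchwartz : 𝓢(ℝ, ℝ) where
  toFun x := Real.exp (-(x ^ 2 / 2))
  smooth' := by fun_prop
  decay' k n := by
    obtain ⟨C, hC⟩ := exists_forall_abs_eval_mul_exp_le
      (X ^ k * (hermite n).map (Int.castRingHom ℝ))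
    refine ⟨C, fun x => (le_of_eq ?_).trans (hC x)⟩
    rw [norm_iteratedFDeriv_eq_norm_iteratedDeriv, iteratedDeriv_eq_iterate,
      deriv_gaussian_eq_hermite_mul_gaussian]
    simp [abs_mul, aeval_def, eval_map, mul_assoc]

lemma hasTemperateGrowth_aeval {R : Type*} [CommSemiring R] [Algebra R ℝ] (p : R[X]) :
    (fun x : ℝ => aeval x p).HasTemperateGrowth := by
  induction p using Polynomial.induction_on' with
  | add p q hp hq =>
    simp only [map_add]
    exact hp.add hq
  | monomial n a =>
    simp only [aeval_monomial]
    fun_prop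

/-- The Hermite function `h_k(√2 x) e^{-x²/2}` before normalization, as a Schwartz function. -/
noncomputable def hermiteGaussian (k : ℕ) : 𝓢(ℝ, ℝ) :=
  smulLeftCLM ℝ (fun x : ℝ => aeval (√2 * x) (hermite k)) gaussianSchwartz

lemma hermiteGaussian_apply (k : ℕ) (x : ℝ) :
    hermiteGaussian k x = aeval (√2 * x) (hermite k) * Real.exp (-(x ^ 2 / 2)) :=
  smulLeftCLM_apply_apply ((hasTemperateGrowth_aeval _).comp (by fun_prop)) _ _

lemma deriv_hermiteGaussian (k : ℕ) (x : ℝ) :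
    deriv (hermiteGaussian k) x =
      √2 * aeval (√2 * x) (derivative (hermite k)) * Real.exp (-(x ^ 2 / 2)) -
        x * hermiteGaussian k x := by
  have hpoly : HasDerivAt (fun y => aeval (√2 * y) (hermite k))
      (aeval (√2 * x) (derivative (hermite k)) * √2) x := by
    have h := ((hermite k).hasDerivAt_aeval (√2 * x)).comp x ((hasDerivAt_id' x).const_mul √2)
    rwa [mul_one] at h
  have hexp : HasDerivAt (fun y : ℝ => Real.exp (-(y ^ 2 / 2)))
      (Real.exp (-(x ^ 2 / 2)) * (-x)) x := by
    simpa using (((hasDerivAt_pow 2 x).div_const 2).neg).exp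
  rw [(hpoly.mul hexp).congr_of_eventuallyEq (.of_forall (hermiteGaussian_apply k)) |>.deriv,
    hermiteGaussian_apply]
  ring

lemma derivative_hermite_succ (k : ℕ) :
    derivative (hermite (k + 1)) = ((k : ℤ[X]) + 1) * hermite k := by
  induction k with
  | zero => simp
  | succ k ih =>
    rw [hermite_succ (k + 1)]
    simp only [derivative_sub, derivative_mul, derivative_X, ih, derivative_add,
      derivative_natCast, derivative_one]
    rw [hermite_succ k]
    push_cast
    ring

lemma raisingOperator_hermiteGaussian (k : ℕ) :
    raisingOperator (hermiteGaussian k) = √2 • hermiteGaussian (k + 1) := by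
  ext x
  rw [raisingOperator_apply, deriv_hermiteGaussian, smul_apply, smul_eq_mul,
    hermiteGaussian_apply, hermiteGaussian_apply, hermite_succ, map_sub, map_mul, aeval_X]
  linear_combination -x * aeval (√2 * x) (hermite k) * Real.exp (-(x ^ 2 / 2)) *
    Real.sq_sqrt zero_le_two

lemma loweringOperator_hermiteGaussian_zero : loweringOperator (hermiteGaussian 0) = 0 := by
  ext x
  rw [loweringOperator_apply, deriv_hermiteGaussian]
  simp

lemma loweringOperator_hermiteGaussian_succ (k : ℕ) :
    loweringOperator (hermiteGaussian (k + 1)) = (√2 * (k + 1)) • hermiteGaussian k := by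
  ext x
  rw [loweringOperator_apply, deriv_hermiteGaussian, derivative_hermite_succ, smul_apply,
    smul_eq_mul, hermiteGaussian_apply k]
  simp only [map_mul, map_add, map_natCast, map_one]
  ring

lemma harmonicOscillator_hermiteGaussian (k : ℕ) :
    harmonicOscillator (hermiteGaussian k) = (2 * k + 1 : ℝ) • hermiteGaussian k := by
  rw [harmonicOscillator_eq_loweringOperator_raisingOperator, raisingOperator_hermiteGaussian,
    map_smul, loweringOperator_hermiteGaussian_succ, smul_smul, ← mul_assoc,
    Real.mul_self_sqrt zero_le_two]
  module

lemma integral_hermiteGaussian_mul (m n : ℕ) :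
    ∫ x, hermiteGaussian m x * hermiteGaussian n x =
      if m = n then √Real.pi * m.factorial else 0 := by
  have hraise (m n : ℕ) : √2 * ∫ x, hermiteGaussian m x * hermiteGaussian (n + 1) x =
      ∫ x, loweringOperator (hermiteGaussian m) x * hermiteGaussian n x := by
    rw [← integral_mul_raisingOperator, raisingOperator_hermiteGaussian, ← integral_const_mul]
    simp only [smul_apply, smul_eq_mul, mul_left_comm]
  have hzero (n : ℕ) : ∫ x, hermiteGaussian 0 x * hermiteGaussian (n + 1) x = 0 := by
    simpa [loweringOperator_hermiteGaussian_zero] using hraise 0 n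
  induction m generalizing n with
  | zero =>
    cases n with
    | zero =>
      have h := integral_gaussian 1
      simpa [hermiteGaussian_apply, ← Real.exp_add, ← neg_add] using h
    | succ n => simp [hzero]
  | succ m ih =>
    cases n with
    | zero => simpa [mul_comm] using hzero m
    | succ n =>
      refine mul_left_cancel₀ (Real.sqrt_ne_zero'.2 zero_lt_two) ((hraise _ _).trans ?_)
      rw [loweringOperator_hermiteGaussian_succ]
      simp only [smul_apply, smul_eq_mul, mul_assoc]
      rw [integral_const_mul, integral_const_mul, ih, Nat.factorial_succ]
      simp only [Nat.succ_inj]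
      split_ifs <;> push_cast <;> ring

/-- The Hermite function `hermiteFun n` as a Schwartz function. -/
noncomputable def hermiteSchwartz (n : ℕ+) : 𝓢(ℝ, ℝ) :=
  (Real.pi ^ (-(1 / 4 : ℝ)) * ((Nat.factorial (n - 1) : ℝ)) ^ (-(1 / 2 : ℝ))) •
    hermiteGaussian (n - 1)

lemma hermiteSchwartz_apply (n : ℕ+) (x : ℝ) : hermiteSchwartz n x = hermiteFun n x := by
  simp only [hermiteSchwartz, hermiteFun, smul_apply, smul_eq_mul, hermiteGaussian_apply, neg_div]
  ring

lemma harmonicOscillator_hermiteSchwartz (n : ℕ+) :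
    harmonicOscillator (hermiteSchwartz n) = (2 * n - 1 : ℝ) • hermiteSchwartz n := by
  have hn : (2 * (n - 1 : ℕ) + 1 : ℝ) = 2 * n - 1 := by
    rw [Nat.cast_pred n.pos]
    ring
  rw [hermiteSchwartz, map_smul, harmonicOscillator_hermiteGaussian, hn, smul_comm]

lemma integral_hermiteSchwartz_mul (m n : ℕ+) :
    ∫ x, hermiteSchwartz m x * hermiteSchwartz n x = if m = n then 1 else 0 := by
  have hpi : (Real.pi ^ (-(1 / 4 : ℝ))) ^ 2 * √Real.pi = 1 := by
    rw [← Real.rpow_mul_natCast Real.pi_nonneg, Real.sqrt_eq_rpow, ← Real.rpow_add Real.pi_pos]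
    norm_num
  have hfactorial (k : ℕ) : ((k.factorial : ℝ) ^ (-(1 / 2 : ℝ))) ^ 2 * k.factorial = 1 := by
    rw [← Real.rpow_mul_natCast k.factorial.cast_nonneg,
      ← Real.rpow_add_one (Nat.cast_ne_zero.2 k.factorial_ne_zero)]
    norm_num
  simp only [hermiteSchwartz, smul_apply, smul_eq_mul, mul_mul_mul_comm _ (hermiteGaussian _ _)]
  rw [integral_const_mul, integral_hermiteGaussian_mul]
  rcases eq_or_ne m n with rfl | hmn
  · rw [if_pos rfl, if_pos rfl]
    linear_combination (((m - 1 : ℕ).factorial : ℝ) ^ (-(1 / 2 : ℝ))) ^ 2 * (m - 1 : ℕ).factorial *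
      hpi + hfactorial (m - 1)
  · have hmn' : (m - 1 : ℕ) ≠ n - 1 := fun h => hmn <| PNat.natPred_inj.1 h
    rw [if_neg hmn', if_neg hmn, mul_zero]

end HermiteFunctions

section HermiteExpansion

lemma summable_abs_mul_inner {κ H : Type*} [NormedAddCommGroup H] [InnerProductSpace ℝ H]
    {v : κ → H} (hv : Orthonormal ℝ v) {c : κ → ℝ} (hc : Summable fun i => c i ^ 2) (y : H) :
    Summable fun i => |c i * inner ℝ (v i) y| := by
  have hbessel : Summable fun i => inner ℝ (v i) y ^ 2 := by
    simpa using hv.inner_products_summable y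
  refine (hc.add hbessel).of_nonneg_of_le (fun _ => abs_nonneg _) fun i => ?_
  rw [abs_mul]
  nlinarith [sq_nonneg (|c i| - |inner ℝ (v i) y|), sq_abs (c i), sq_abs (inner ℝ (v i) y)]

lemma exists_forall_inner_eq_tsum {κ H : Type*} [NormedAddCommGroup H] [InnerProductSpace ℝ H]
    [CompleteSpace H] {v : κ → H} (hv : Orthonormal ℝ v) {c : κ → ℝ}
    (hc : Summable fun i => c i ^ 2) :
    ∃ g : H, ∀ y, inner ℝ g y = ∑' i, c i * inner ℝ (v i) y := by
  have hsum : Summable fun i => c i • v i :=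
    (hv.orthogonalFamily.summable_iff_norm_sq_summable c).2 (by simpa using hc)
  refine ⟨∑' i, c i • v i, fun y => ?_⟩
  simpa only [innerSL_apply_apply, inner_smul_right, real_inner_comm y] using
    (innerSL ℝ y).map_tsum hsum

lemma inner_toLp_toLp {E : Type*} [NormedAddCommGroup E] [NormedSpace ℝ E] [MeasurableSpace E]
    [OpensMeasurableSpace E] (μ : Measure E) [μ.HasTemperateGrowth] (f g : 𝓢(E, ℝ)) :
    inner ℝ (f.toLp 2 μ) (g.toLp 2 μ) = ∫ x, f x * g x ∂μ := by
  refine integral_congr_ae ?_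
  filter_upwards [f.coeFn_toLp 2 μ, g.coeFn_toLp 2 μ] with x hf hg
  rw [hf, hg, Real.inner_apply]

variable {ι : Type*} [Fintype ι]

/-- The tensor-product Hermite function `η_β` as a Schwartz function. -/
noncomputable def hermiteTensorSchwartz (β : ι → ℕ+) : 𝓢(EuclideanSpace ℝ ι, ℝ) :=
  schwartzTensor fun i => hermiteSchwartz (β i)

lemma hermiteTensorSchwartz_apply {d : ℕ} (β : Fin d → ℕ+) (x : EuclideanSpace ℝ (Fin d)) :
    hermiteTensorSchwartz β x = hermiteTensor β x := by
  simp only [hermiteTensorSchwartz, schwartzTensor_apply, hermiteSchwartz_apply, hermiteTensor]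

lemma orthonormal_hermiteTensorSchwartz :
    Orthonormal ℝ fun β : ι → ℕ+ => (hermiteTensorSchwartz β).toLp 2 := by
  classical
  refine orthonormal_iff_ite.2 fun β γ => ?_
  simp only [inner_toLp_toLp, hermiteTensorSchwartz, integral_schwartzTensor_mul,
    integral_hermiteSchwartz_mul, prod_ite_zero, prod_const_one, mem_univ, true_imp_iff, funext_iff]

/-- The eigenvalue of the harmonic oscillator at the Hermite function `η_β`. -/
noncomputable def hermiteEigenvalue (β : ι → ℕ+) : ℝ := ∑ i, (2 * β i - 1 : ℝ)

lemma harmonicOscillator_hermiteTensorSchwartz (β : ι → ℕ+) :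
    harmonicOscillator (hermiteTensorSchwartz β) =
      hermiteEigenvalue β • hermiteTensorSchwartz β :=
  harmonicOscillator_schwartzTensor_of_eigen fun _ => harmonicOscillator_hermiteSchwartz _

lemma one_le_prod_pnat_pow (β : ι → ℕ+) (θ : ι → ℕ) : 1 ≤ ∏ i, ((β i : ℕ) : ℝ) ^ θ i :=
  one_le_prod fun i _ => one_le_pow₀ (Nat.one_le_cast.2 (β i).pos)

lemma prod_pow_le_hermiteEigenvalue_pow (β : ι → ℕ+) (θ : ι → ℕ) :
    ∏ i, ((β i : ℕ) : ℝ) ^ θ i ≤ hermiteEigenvalue β ^ ∑ i, θ i := by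
  have hβ (i : ι) : (1 : ℝ) ≤ (β i : ℕ) := Nat.one_le_cast.2 (β i).pos
  have hle (i : ι) : ((β i : ℕ) : ℝ) ≤ hermiteEigenvalue β :=
    calc ((β i : ℕ) : ℝ) ≤ 2 * (β i : ℕ) - 1 := by linarith [hβ i]
      _ ≤ hermiteEigenvalue β :=
        single_le_sum (f := fun i => (2 * (β i : ℕ) - 1 : ℝ)) (fun j _ => by linarith [hβ j])
          (mem_univ i)
  rw [← prod_pow_eq_pow_sum]
  gcongr with i
  exact hle i

lemma summable_sq_div_hermiteEigenvalue_pow {b : (ι → ℕ+) → ℝ} {θ : ι → ℕ}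
    (hb : Summable fun β => b β ^ 2 * ∏ i, (((β i : ℕ) : ℝ) ^ θ i)⁻¹) :
    Summable fun β => (b β / hermiteEigenvalue β ^ ∑ i, θ i) ^ 2 := by
  refine hb.of_nonneg_of_le (fun _ => sq_nonneg _) fun β => ?_
  have hone := one_le_prod_pnat_pow β θ
  have hle := prod_pow_le_hermiteEigenvalue_pow β θ
  rw [div_pow, prod_inv_distrib, ← div_eq_mul_inv]
  gcongr
  exact (le_self_pow₀ hone two_ne_zero).trans (by gcongr)

lemma inner_hermiteTensorSchwartz_harmonicOscillator_pow (φ : 𝓢(EuclideanSpace ℝ ι, ℝ))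
    (β : ι → ℕ+) (m : ℕ) :
    inner ℝ ((hermiteTensorSchwartz β).toLp 2) (((harmonicOscillator ^ m) φ).toLp 2) =
      hermiteEigenvalue β ^ m * ∫ x, φ x * hermiteTensorSchwartz β x := by
  rw [real_inner_comm, inner_toLp_toLp,
    integral_harmonicOscillator_pow_mul (harmonicOscillator_hermiteTensorSchwartz β)]

end HermiteExpansion

/-- A coefficient family of at most polynomial growth defines a tempered
distribution `T = ∑_β b_β η_β`. -/
theorem hermite_coefficients_define_tempered_distribution (d : ℕ) (hd : 1 ≤ d)
    (b : (Fin d → ℕ+) → ℝ) (θ : Fin d → ℕ)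
    (hb : Summable fun β : Fin d → ℕ+ =>
      b β ^ 2 * ∏ i, (((β i : ℕ) : ℝ) ^ (θ i))⁻¹) :
    (∀ φ : SchwartzMap (EuclideanSpace ℝ (Fin d)) ℝ,
      Summable fun β : Fin d → ℕ+ => |b β * ∫ x, φ x * hermiteTensor β x|) ∧
    ∃ T : SchwartzMap (EuclideanSpace ℝ (Fin d)) ℝ →L[ℝ] ℝ,
      ∀ φ : SchwartzMap (EuclideanSpace ℝ (Fin d)) ℝ,
        T φ = ∑' β : Fin d → ℕ+, b β * ∫ x, φ x * hermiteTensor β x := by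
  let m := ∑ i, θ i
  let c (β : Fin d → ℕ+) : ℝ := b β / hermiteEigenvalue β ^ m
  have hcoeff (φ : 𝓢(EuclideanSpace ℝ (Fin d), ℝ)) (β : Fin d → ℕ+) :
      b β * ∫ x, φ x * hermiteTensor β x =
        c β * inner ℝ ((hermiteTensorSchwartz β).toLp 2) (((harmonicOscillator ^ m) φ).toLp 2) := by
    have hpos : 0 < hermiteEigenvalue β ^ m :=
      zero_lt_one.trans_le <|
        (one_le_prod_pnat_pow β θ).trans (prod_pow_le_hermiteEigenvalue_pow β θ)
    simp only [inner_hermiteTensorSchwartz_harmonicOscillator_pow, hermiteTensorSchwartz_apply]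
    rw [← mul_assoc, div_mul_cancel₀ _ hpos.ne']
  have hc : Summable fun β => c β ^ 2 := summable_sq_div_hermiteEigenvalue_pow hb
  obtain ⟨g, hg⟩ := exists_forall_inner_eq_tsum orthonormal_hermiteTensorSchwartz hc
  simp only [hcoeff]
  exact ⟨fun φ => summable_abs_mul_inner orthonormal_hermiteTensorSchwartz hc _,
    innerSL ℝ g ∘L toLpCLM ℝ ℝ 2 volume ∘L harmonicOscillator ^ m, fun φ => hg _⟩
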